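/- arXiv:1702.00547 — 2 statements merged into one kernel-verified Lean document; each statement's English description precedes it below -/
import Mathlib

section
/- Let m, p1, p2, q, n1, n2 be positive natural numbers and let A1 ∈ ℍ^{m×p1}, A2 ∈ ℍ^{m×p2}, B1 ∈ ℍ^{q×n1}, B2 ∈ ℍ^{q×n2}, C1 ∈ ℍ^{m×n1}, C2 ∈ ℍ^{m×n2} be quaternion matrices. Define D1 = R_{B1} B2, A = R_{A2} A1, B = B2 L_{D1}, and C = R_{A2} (R_{A1} C1 B1⁺ B2 − C2) L_{D1}. Then there exist quaternion matrices X ∈ ℍ^{p1×n1}, Y ∈ ℍ^{m×q}, Z ∈ ℍ^{p2×n2} satisfying A1 X − Y B1 = C1 and A2 Z − Y B2 = C2 if and only if R_{A1} C1 L_{B1} = 0, R_A C = 0, and C L_B = 0. -/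
open Matrix

noncomputable section

/-- `Mat a b` is the type of `a × b` matrices over the real quaternions. -/
abbrev Mat (a b : ℕ) := Matrix (Fin a) (Fin b) (Quaternion ℝ)

/-- `Ad` is a Moore–Penrose inverse of `A`: the four Penrose equations hold. -/
def IsMPInv {k l : Type*} [Fintype k] [Fintype l]
    (A : Matrix k l (Quaternion ℝ)) (Ad : Matrix l k (Quaternion ℝ)) : Prop :=
  A * Ad * A = A ∧ Ad * A * Ad = Ad ∧ (A * Ad)ᴴ = A * Ad ∧ (Ad * A)ᴴ = Ad * A

/-- The projector `L_A = I - A⁺ A`. -/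
def Lp {k l : Type*} [Fintype k] [Fintype l] [DecidableEq l]
    (A : Matrix k l (Quaternion ℝ)) (Ad : Matrix l k (Quaternion ℝ)) :
    Matrix l l (Quaternion ℝ) :=
  1 - Ad * A

/-- The projector `R_A = I - A A⁺`. -/
def Rp {k l : Type*} [Fintype k] [Fintype l] [DecidableEq k]
    (A : Matrix k l (Quaternion ℝ)) (Ad : Matrix l k (Quaternion ℝ)) :
    Matrix k k (Quaternion ℝ) :=
  1 - A * Ad

/-!
The unknowns `X` and `Z` are eliminated first: what remains are two conditions on `Y` alone.
The first one is solved by `Y = A₁ U + W R_{B₁} - R_{A₁} C₁ B₁⁻` with `U` and `W` free, provided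
that `R_{A₁} C₁ L_{B₁} = 0`. In the second one, `W` occurs only in the term `R_{A₂} W D`, so it is
eliminated by multiplying by `L_D` on the right. This leaves the single equation `A U B = C`.
-/

/-- `A'` is an inner (von Neumann) inverse of `A`, the first of the four Penrose equations. It is
what the solvability criteria for linear matrix equations use of `A⁺`, over any ring. -/
def IsInnerInverse {R k l : Type*} [Ring R] [Fintype k] [Fintype l]
    (A : Matrix k l R) (A' : Matrix l k R) : Prop :=
  A * A' * A = A

theorem IsMPInv.isInnerInverse {k l : Type*} [Fintype k] [Fintype l]
    {A : Matrix k l (Quaternion ℝ)} {Ad : Matrix l k (Quaternion ℝ)} (h : IsMPInv A Ad) :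
    IsInnerInverse A Ad :=
  h.1

namespace IsInnerInverse

variable {R j k l m n : Type*} [Ring R] [Fintype k] [Fintype l]
  {A : Matrix k l R} {A' : Matrix l k R}

theorem one_sub_mul_mul_self [DecidableEq k] (hA : IsInnerInverse A A') :
    (1 - A * A') * A = 0 := by
  rw [Matrix.sub_mul, Matrix.one_mul, hA, sub_self]

theorem self_mul_one_sub_mul [DecidableEq l] (hA : IsInnerInverse A A') :
    A * (1 - A' * A) = 0 := by
  rw [Matrix.mul_sub, Matrix.mul_one, ← Matrix.mul_assoc, hA, sub_self]

theorem isIdempotentElem_one_sub_mul [DecidableEq k] (hA : IsInnerInverse A A') :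
    IsIdempotentElem (1 - A * A') :=
  IsIdempotentElem.one_sub <| by rw [IsIdempotentElem, ← Matrix.mul_assoc, hA]

theorem exists_mul_left_eq_iff [DecidableEq k] (hA : IsInnerInverse A A') (C : Matrix k j R) :
    (∃ X : Matrix l j R, A * X = C) ↔ (1 - A * A') * C = 0 := by
  constructor
  · rintro ⟨X, rfl⟩
    rw [← Matrix.mul_assoc, hA.one_sub_mul_mul_self, Matrix.zero_mul]
  · intro hC
    refine ⟨A' * C, ?_⟩
    rwa [Matrix.sub_mul, Matrix.one_mul, sub_eq_zero, eq_comm, Matrix.mul_assoc] at hC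

theorem exists_mul_right_eq_iff [DecidableEq l] (hA : IsInnerInverse A A') (C : Matrix j l R) :
    (∃ Y : Matrix j k R, Y * A = C) ↔ C * (1 - A' * A) = 0 := by
  constructor
  · rintro ⟨Y, rfl⟩
    rw [Matrix.mul_assoc, hA.self_mul_one_sub_mul, Matrix.mul_zero]
  · intro hC
    refine ⟨C * A', ?_⟩
    rwa [Matrix.mul_sub, Matrix.mul_one, sub_eq_zero, eq_comm, ← Matrix.mul_assoc] at hC

theorem exists_mul_sub_mul_eq_iff [DecidableEq k] [Fintype m] (hA : IsInnerInverse A A')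
    (Y : Matrix k m R) (B : Matrix m n R) (C : Matrix k n R) :
    (∃ X : Matrix l n R, A * X - Y * B = C) ↔ (1 - A * A') * (C + Y * B) = 0 := by
  simp only [sub_eq_iff_eq_add, hA.exists_mul_left_eq_iff]

variable [Fintype m] [Fintype n] {B : Matrix m n R} {B' : Matrix n m R}

theorem exists_mul_mul_eq_iff [DecidableEq k] [DecidableEq n] (hA : IsInnerInverse A A')
    (hB : IsInnerInverse B B') (C : Matrix k n R) :
    (∃ U : Matrix l m R, A * U * B = C) ↔ (1 - A * A') * C = 0 ∧ C * (1 - B' * B) = 0 := by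
  rw [← hA.exists_mul_left_eq_iff, ← hB.exists_mul_right_eq_iff]
  constructor
  · rintro ⟨U, rfl⟩
    exact ⟨⟨U * B, (Matrix.mul_assoc ..).symm⟩, A * U, rfl⟩
  · rintro ⟨⟨X, hX⟩, Y, rfl⟩
    refine ⟨A' * Y, ?_⟩
    rw [Matrix.mul_assoc, Matrix.mul_assoc, ← hX, ← Matrix.mul_assoc, ← Matrix.mul_assoc, hA]

theorem exists_mul_sub_add_mul_mul_eq_iff [DecidableEq k] [DecidableEq n] [Fintype j]
    (hA : IsInnerInverse A A') {Q : Matrix j m R} {D' : Matrix n j R}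
    (hD : IsInnerInverse (Q * B) D') (Y₀ : Matrix k m R) (C : Matrix k n R) :
    (∃ (W : Matrix k j R) (X : Matrix l n R), A * X - (Y₀ + W * Q) * B = C) ↔
      (1 - A * A') * (C + Y₀ * B) * (1 - D' * (Q * B)) = 0 := by
  simp only [hA.exists_mul_sub_mul_eq_iff, ← hD.exists_mul_right_eq_iff]
  simp only [Matrix.add_mul, Matrix.mul_assoc _ Q B, ← add_assoc]
  set P := 1 - A * A'
  set K := C + Y₀ * B
  -- `P` fixes `P * K`, so asking the unknown to have the form `P * W` costs no solvability.
  have hP : P * P = P := hA.isIdempotentElem_one_sub_mul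
  constructor
  · rintro ⟨W, hW⟩
    refine ⟨-(P * W), ?_⟩
    rw [Matrix.mul_add, add_eq_zero_iff_eq_neg] at hW
    rw [hW, Matrix.neg_mul, Matrix.mul_assoc]
  · rintro ⟨V, hV⟩
    refine ⟨-V, ?_⟩
    rw [Matrix.neg_mul, hV, ← sub_eq_add_neg, Matrix.mul_sub, ← Matrix.mul_assoc, hP, sub_self]

theorem exists_mul_sub_mul_eq_iff_exists_eq [DecidableEq k] [DecidableEq m] [DecidableEq n]
    (hA : IsInnerInverse A A') (hB : IsInnerInverse B B') (Y : Matrix k m R) (C : Matrix k n R) :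
    (∃ X : Matrix l n R, A * X - Y * B = C) ↔
      (1 - A * A') * C * (1 - B' * B) = 0 ∧
        ∃ (U : Matrix l m R) (W : Matrix k m R),
          Y = A * U - (1 - A * A') * C * B' + W * (1 - B * B') := by
  constructor
  · rintro ⟨X, rfl⟩
    have hRC : (1 - A * A') * (A * X - Y * B) = -((1 - A * A') * Y * B) := by
      rw [Matrix.mul_sub, ← Matrix.mul_assoc, hA.one_sub_mul_mul_self, Matrix.zero_mul, zero_sub,
        Matrix.mul_assoc]
    refine ⟨?_, A' * Y, (1 - A * A') * Y, ?_⟩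
    · rw [hRC, Matrix.neg_mul, Matrix.mul_assoc, hB.self_mul_one_sub_mul, Matrix.mul_zero, neg_zero]
    · rw [hRC]
      simp only [Matrix.sub_mul, Matrix.mul_sub, Matrix.neg_mul, Matrix.one_mul, Matrix.mul_one,
        Matrix.mul_assoc]
      abel
  · rintro ⟨hC, U, W, rfl⟩
    have hRC : (1 - A * A') * C * B' * B = (1 - A * A') * C := by
      rwa [Matrix.mul_sub, Matrix.mul_one, sub_eq_zero, ← Matrix.mul_assoc, eq_comm] at hC
    have hYB : (A * U - (1 - A * A') * C * B' + W * (1 - B * B')) * B =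
        A * U * B - (1 - A * A') * C := by
      rw [Matrix.add_mul, Matrix.sub_mul, hRC, Matrix.mul_assoc W, hB.one_sub_mul_mul_self,
        Matrix.mul_zero, add_zero]
    refine ⟨U * B + A' * C, ?_⟩
    rw [hYB]
    simp only [Matrix.mul_add, Matrix.sub_mul, Matrix.one_mul, Matrix.mul_assoc]
    abel

end IsInnerInverse

theorem stmt_0_general {R m p₁ p₂ q n₁ n₂ : Type*} [Ring R] [Fintype m] [Fintype p₁]
    [Fintype p₂] [Fintype q] [Fintype n₁] [Fintype n₂] [DecidableEq m] [DecidableEq q]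
    [DecidableEq n₁] [DecidableEq n₂]
    {A₁ : Matrix m p₁ R} {A₁' : Matrix p₁ m R} (hA₁ : IsInnerInverse A₁ A₁')
    {A₂ : Matrix m p₂ R} {A₂' : Matrix p₂ m R} (hA₂ : IsInnerInverse A₂ A₂')
    {B₁ : Matrix q n₁ R} {B₁' : Matrix n₁ q R} (hB₁ : IsInnerInverse B₁ B₁')
    {B₂ : Matrix q n₂ R} {C₁ : Matrix m n₁ R} {C₂ : Matrix m n₂ R}
    {D : Matrix q n₂ R} (hD : D = (1 - B₁ * B₁') * B₂)
    {D' : Matrix n₂ q R} (hD' : IsInnerInverse D D')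
    {A : Matrix m p₁ R} (hA : A = (1 - A₂ * A₂') * A₁)
    {A' : Matrix p₁ m R} (hA' : IsInnerInverse A A')
    {B : Matrix q n₂ R} (hB : B = B₂ * (1 - D' * D))
    {B' : Matrix n₂ q R} (hB' : IsInnerInverse B B')
    {C : Matrix m n₂ R}
    (hC : C = (1 - A₂ * A₂') * ((1 - A₁ * A₁') * C₁ * B₁' * B₂ - C₂) * (1 - D' * D)) :
    (∃ (X : Matrix p₁ n₁ R) (Y : Matrix m q R) (Z : Matrix p₂ n₂ R),
        A₁ * X - Y * B₁ = C₁ ∧ A₂ * Z - Y * B₂ = C₂) ↔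
      (1 - A₁ * A₁') * C₁ * (1 - B₁' * B₁) = 0 ∧
        (1 - A * A') * C = 0 ∧ C * (1 - B' * B) = 0 := by
  let Y₀ (U : Matrix p₁ q R) : Matrix m q R := A₁ * U - (1 - A₁ * A₁') * C₁ * B₁'
  have solve_second (U : Matrix p₁ q R) :
      (∃ (W : Matrix m q R) (Z : Matrix p₂ n₂ R),
        A₂ * Z - (Y₀ U + W * (1 - B₁ * B₁')) * B₂ = C₂) ↔ A * U * B = C := by
    have residual : (1 - A₂ * A₂') * (C₂ + Y₀ U * B₂) * (1 - D' * D) = A * U * B - C := by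
      rw [hA, hB, hC]
      simp only [Y₀, Matrix.mul_add, Matrix.add_mul, Matrix.mul_sub (1 - A₂ * A₂'),
        Matrix.sub_mul _ _ B₂, Matrix.sub_mul _ _ (1 - D' * D), Matrix.mul_assoc]
      abel
    subst hD
    rw [hA₂.exists_mul_sub_add_mul_mul_eq_iff hD', residual, sub_eq_zero]
  calc
    _ ↔ ∃ Y : Matrix m q R, (∃ X : Matrix p₁ n₁ R, A₁ * X - Y * B₁ = C₁) ∧
          ∃ Z : Matrix p₂ n₂ R, A₂ * Z - Y * B₂ = C₂ := by
      rw [exists_comm]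
      simp only [exists_and_left, exists_and_right]
    _ ↔ (1 - A₁ * A₁') * C₁ * (1 - B₁' * B₁) = 0 ∧
          ∃ (U : Matrix p₁ q R) (W : Matrix m q R) (Z : Matrix p₂ n₂ R),
            A₂ * Z - (Y₀ U + W * (1 - B₁ * B₁')) * B₂ = C₂ := by
      simp only [hA₁.exists_mul_sub_mul_eq_iff_exists_eq hB₁, and_assoc, exists_and_left]
      refine and_congr_right fun _ => ⟨?_, ?_⟩
      · rintro ⟨_, ⟨U, W, rfl⟩, hZ⟩
        exact ⟨U, W, hZ⟩
      · rintro ⟨U, W, hZ⟩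
        exact ⟨_, ⟨U, W, rfl⟩, hZ⟩
    _ ↔ _ := by simp only [solve_second, hA'.exists_mul_mul_eq_iff hB']

theorem stmt_0 {m p1 p2 q n1 n2 : ℕ}
    (hm : 0 < m) (hp1 : 0 < p1) (hp2 : 0 < p2) (hq : 0 < q) (hn1 : 0 < n1) (hn2 : 0 < n2)
    (A1 : Mat m p1) (A1d : Mat p1 m) (hA1 : IsMPInv A1 A1d)
    (A2 : Mat m p2) (A2d : Mat p2 m) (hA2 : IsMPInv A2 A2d)
    (B1 : Mat q n1) (B1d : Mat n1 q) (hB1 : IsMPInv B1 B1d)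
    (B2 : Mat q n2) (C1 : Mat m n1) (C2 : Mat m n2)
    (D1 : Mat q n2) (hD1 : D1 = Rp B1 B1d * B2)
    (D1d : Mat n2 q) (hD1d : IsMPInv D1 D1d)
    (A : Mat m p1) (hA : A = Rp A2 A2d * A1)
    (Ad : Mat p1 m) (hAd : IsMPInv A Ad)
    (B : Mat q n2) (hB : B = B2 * Lp D1 D1d)
    (Bd : Mat n2 q) (hBd : IsMPInv B Bd)
    (C : Mat m n2)
    (hC : C = Rp A2 A2d * (Rp A1 A1d * C1 * B1d * B2 - C2) * Lp D1 D1d) :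
    (∃ (X : Mat p1 n1) (Y : Mat m q) (Z : Mat p2 n2),
        A1 * X - Y * B1 = C1 ∧ A2 * Z - Y * B2 = C2) ↔
      (Rp A1 A1d * C1 * Lp B1 B1d = 0 ∧ Rp A Ad * C = 0 ∧ C * Lp B Bd = 0) :=
  stmt_0_general hA1.isInnerInverse hA2.isInnerInverse hB1.isInnerInverse hD1
    hD1d.isInnerInverse hA hAd.isInnerInverse hB hBd.isInnerInverse hC
end
end

section
/- Let A1 ∈ ℍ^{m1×p}, A2 ∈ ℍ^{m2×p}, B1 ∈ ℍ^{q1×n}, B2 ∈ ℍ^{q2×n}, C1 ∈ ℍ^{m1×n}, C2 ∈ ℍ^{m2×n} be quaternion matrices, and define A11 = R_{(A2 L_{A1})} A2, B11 = B1 L_{B2}, C11 = R_{(A2 L_{A1})} (C2 − A2 A1⁺ C1) L_{B2}. Assume R_{A1} C1 L_{B1} = 0, R_{A11} C11 = 0 and C11 L_{B11} = 0. Then quaternion matrices (X1, X2, X3) of sizes p×n, m1×q1, m2×q2 satisfy A1 X1 − X2 B1 = C1 and A2 X1 − X3 B2 = C2 if and only if there exist quaternion matrices W1, W2, W3, W4,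 W5, W6 of appropriate sizes such that, setting U1 = A11⁺ C11 B11⁺ + L_{A11} W4 + W5 R_{B11} and U2 = (A2 L_{A1})⁺ (C2 − A2 A1⁺ C1 − A2 U1 B1) + W1 B2 + L_{(A2 L_{A1})} W2, one has X1 = A1⁺ C1 + U1 B1 + L_{A1} U2, X2 = −R_{A1} C1 B1⁺ + A1 U1 + W6 R_{B1}, and X3 = −R_{(A2 L_{A1})} (C2 − A2 A1⁺ C1 − A2 U1 B1) B2⁺ + A2 L_{A1} W1 + W3 R_{B2}. -/
open Matrix

noncomputable section

/-! Solve `A1 X1 - X2 B1 = C1` with free parameters `U1`, `U2` and substitute the resulting `X1` in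
`A2 X1 - X3 B2 = C2`. With `L = 1 - A1⁺ A1`, what remains is an equation of the same kind,
`(A2 L) U2 - X3 B2 = C2 - A2 A1⁺ C1 - A2 U1 B1`, in the unknowns `U2`, `X3`; its solvability
condition is the two-sided equation `A11 U1 B11 = C11` for the remaining parameter `U1`. -/

/-- `Ad` is an inner inverse (also `{1}`-inverse) of the matrix `A`: the first of the four Penrose
equations holds. The projectors `L_A` and `R_A` are written out as `1 - Ad * A` and `1 - A * Ad`. -/
def IsInnerInv {R k l : Type*} [Semiring R] [Fintype k] [Fintype l]
    (A : Matrix k l R) (Ad : Matrix l k R) : Prop :=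
  A * Ad * A = A

section InnerInverse

variable {R k l r s : Type*} [Ring R] [Fintype k] [Fintype l] [Fintype r] [Fintype s]
  {A : Matrix k l R} {Ad : Matrix l k R} {B : Matrix r s R} {Bd : Matrix s r R}

lemma IsInnerInv.mul_one_sub_mul [DecidableEq l] (hA : IsInnerInv A Ad) :
    A * (1 - Ad * A) = 0 := by
  rw [Matrix.mul_sub, Matrix.mul_one, ← Matrix.mul_assoc, hA, sub_self]

lemma IsInnerInv.one_sub_mul_mul [DecidableEq k] (hA : IsInnerInv A Ad) :
    (1 - A * Ad) * A = 0 := by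
  rw [Matrix.sub_mul, Matrix.one_mul, hA, sub_self]

variable [DecidableEq k] [DecidableEq l] [DecidableEq r] [DecidableEq s]

theorem IsInnerInv.mul_mul_eq_iff (hA : IsInnerInv A Ad) (hB : IsInnerInv B Bd)
    {C : Matrix k s R} {X : Matrix l r R} :
    A * X * B = C ↔ ((1 - A * Ad) * C = 0 ∧ C * (1 - Bd * B) = 0) ∧
      ∃ V W : Matrix l r R, X = Ad * C * Bd + (1 - Ad * A) * V + W * (1 - B * Bd) := by
  constructor
  · rintro rfl
    refine ⟨⟨?_, ?_⟩, X, Ad * A * X, ?_⟩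
    · rw [← Matrix.mul_assoc, ← Matrix.mul_assoc, hA.one_sub_mul_mul, Matrix.zero_mul,
        Matrix.zero_mul]
    · rw [Matrix.mul_assoc, hB.mul_one_sub_mul, Matrix.mul_zero]
    · simp only [Matrix.mul_sub, Matrix.sub_mul, Matrix.mul_one, Matrix.one_mul, Matrix.mul_assoc]
      abel
  · rintro ⟨⟨hCl, hCr⟩, V, W, rfl⟩
    have hACl : A * Ad * C = C := by
      rwa [Matrix.sub_mul, Matrix.one_mul, sub_eq_zero, eq_comm] at hCl
    have hCBr : C * (Bd * B) = C := by
      rwa [Matrix.mul_sub, Matrix.mul_one, sub_eq_zero, eq_comm] at hCr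
    calc A * (Ad * C * Bd + (1 - Ad * A) * V + W * (1 - B * Bd)) * B
        = A * Ad * C * (Bd * B) + A * (1 - Ad * A) * V * B + A * W * ((1 - B * Bd) * B) := by
          simp only [Matrix.mul_add, Matrix.add_mul, Matrix.mul_assoc]
      _ = C := by
          simp only [hACl, hCBr, hA.mul_one_sub_mul, hB.one_sub_mul_mul, Matrix.zero_mul,
            Matrix.mul_zero, add_zero]

theorem IsInnerInv.mul_sub_mul_eq_iff (hA : IsInnerInv A Ad) (hB : IsInnerInv B Bd)
    {C : Matrix k s R} {X : Matrix l s R} {Y : Matrix k r R} :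
    A * X - Y * B = C ↔ (1 - A * Ad) * C * (1 - Bd * B) = 0 ∧
      ∃ (U : Matrix l r R) (V : Matrix l s R) (W : Matrix k r R),
        X = Ad * C + U * B + (1 - Ad * A) * V ∧
        Y = -((1 - A * Ad) * C * Bd) + A * U + W * (1 - B * Bd) := by
  constructor
  · intro h
    have hRC : (1 - A * Ad) * C = -((1 - A * Ad) * Y * B) := by
      rw [← h, Matrix.mul_sub, ← Matrix.mul_assoc, hA.one_sub_mul_mul, Matrix.zero_mul, zero_sub,
        Matrix.mul_assoc]
    refine ⟨?_, Ad * Y, X, (1 - A * Ad) * Y, ?_, ?_⟩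
    · rw [hRC, Matrix.neg_mul, Matrix.mul_assoc, hB.mul_one_sub_mul, Matrix.mul_zero, neg_zero]
    · rw [← h]
      simp only [Matrix.mul_sub, Matrix.sub_mul, Matrix.one_mul, Matrix.mul_assoc]
      abel
    · rw [hRC]
      simp only [Matrix.mul_sub, Matrix.sub_mul, Matrix.mul_one, Matrix.one_mul, Matrix.neg_mul,
        Matrix.mul_assoc]
      abel
  · rintro ⟨hC, U, V, W, rfl, rfl⟩
    have hRC : (1 - A * Ad) * C * (Bd * B) = (1 - A * Ad) * C := by
      rwa [Matrix.mul_sub, Matrix.mul_one, sub_eq_zero, eq_comm] at hC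
    calc A * (Ad * C + U * B + (1 - Ad * A) * V) -
          (-((1 - A * Ad) * C * Bd) + A * U + W * (1 - B * Bd)) * B
        = A * Ad * C + A * (1 - Ad * A) * V + (1 - A * Ad) * C * (Bd * B)
            - W * ((1 - B * Bd) * B) := by
          simp only [Matrix.mul_add, Matrix.add_mul, Matrix.neg_mul, Matrix.mul_assoc]
          abel
      _ = A * Ad * C + (1 - A * Ad) * C := by
          rw [hRC, hA.mul_one_sub_mul, hB.one_sub_mul_mul, Matrix.zero_mul, Matrix.mul_zero,
            add_zero, sub_zero]
      _ = C := by rw [Matrix.sub_mul, Matrix.one_mul, add_sub_cancel]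

end InnerInverse

theorem stmt_5_general {R m1 m2 p q1 q2 n : Type*} [Ring R]
    [Fintype m1] [Fintype m2] [Fintype p] [Fintype q1] [Fintype q2] [Fintype n]
    [DecidableEq m1] [DecidableEq m2] [DecidableEq p] [DecidableEq q1] [DecidableEq q2]
    [DecidableEq n]
    {A1 : Matrix m1 p R} {A1d : Matrix p m1 R} (hA1 : IsInnerInv A1 A1d)
    {A2 : Matrix m2 p R}
    {B1 : Matrix q1 n R} {B1d : Matrix n q1 R} (hB1 : IsInnerInv B1 B1d)
    {B2 : Matrix q2 n R} {B2d : Matrix n q2 R} (hB2 : IsInnerInv B2 B2d)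
    {C1 : Matrix m1 n R} {C2 : Matrix m2 n R}
    {A2L : Matrix m2 p R} (hA2L : A2L = A2 * (1 - A1d * A1))
    {A2Ld : Matrix p m2 R} (hA2Ld : IsInnerInv A2L A2Ld)
    {A11 : Matrix m2 p R} (hA11 : A11 = (1 - A2L * A2Ld) * A2)
    {A11d : Matrix p m2 R} (hA11d : IsInnerInv A11 A11d)
    {B11 : Matrix q1 n R} (hB11 : B11 = B1 * (1 - B2d * B2))
    {B11d : Matrix n q1 R} (hB11d : IsInnerInv B11 B11d)
    {C11 : Matrix m2 n R}
    (hC11 : C11 = (1 - A2L * A2Ld) * (C2 - A2 * A1d * C1) * (1 - B2d * B2))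
    {X1 : Matrix p n R} {X2 : Matrix m1 q1 R} {X3 : Matrix m2 q2 R} :
    (A1 * X1 - X2 * B1 = C1 ∧ A2 * X1 - X3 * B2 = C2) ↔
      ((1 - A1 * A1d) * C1 * (1 - B1d * B1) = 0 ∧
        (1 - A11 * A11d) * C11 = 0 ∧ C11 * (1 - B11d * B11) = 0) ∧
      ∃ (W1 : Matrix p q2 R) (W2 : Matrix p n R) (W3 : Matrix m2 q2 R) (W4 : Matrix p q1 R)
          (W5 : Matrix p q1 R) (W6 : Matrix m1 q1 R) (U1 : Matrix p q1 R) (U2 : Matrix p n R),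
        U1 = A11d * C11 * B11d + (1 - A11d * A11) * W4 + W5 * (1 - B11 * B11d) ∧
        U2 = A2Ld * (C2 - A2 * A1d * C1 - A2 * U1 * B1)
              + W1 * B2 + (1 - A2Ld * A2L) * W2 ∧
        X1 = A1d * C1 + U1 * B1 + (1 - A1d * A1) * U2 ∧
        X2 = -((1 - A1 * A1d) * C1 * B1d) + A1 * U1 + W6 * (1 - B1 * B1d) ∧
        X3 = -((1 - A2L * A2Ld) * (C2 - A2 * A1d * C1 - A2 * U1 * B1) * B2d)
              + A2 * (1 - A1d * A1) * W1 + W3 * (1 - B2 * B2d) := by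
  have second_eq_iff (U1 : Matrix p q1 R) (U2 : Matrix p n R) :
      A2 * (A1d * C1 + U1 * B1 + (1 - A1d * A1) * U2) - X3 * B2 = C2 ↔
        A2L * U2 - X3 * B2 = C2 - A2 * A1d * C1 - A2 * U1 * B1 := by
    rw [hA2L, sub_sub, eq_sub_iff_add_eq']
    simp only [Matrix.mul_add, Matrix.mul_assoc, add_sub_assoc]
  have solvable_iff (U1 : Matrix p q1 R) :
      (1 - A2L * A2Ld) * (C2 - A2 * A1d * C1 - A2 * U1 * B1) * (1 - B2d * B2) = 0 ↔
        A11 * U1 * B11 = C11 := by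
    rw [Matrix.mul_sub _ (C2 - _), Matrix.sub_mul, ← hC11, sub_eq_zero, eq_comm, hA11, hB11]
    simp only [Matrix.mul_assoc]
  rw [← hA2L]
  constructor
  · rintro ⟨h1, h2⟩
    obtain ⟨hC1, U1, U2, W6, rfl, hX2⟩ := (hA1.mul_sub_mul_eq_iff hB1).1 h1
    obtain ⟨hE, W1, W2, W3, hU2, hX3⟩ :=
      (hA2Ld.mul_sub_mul_eq_iff hB2).1 ((second_eq_iff U1 U2).1 h2)
    obtain ⟨hC, W4, W5, hU1⟩ := (hA11d.mul_mul_eq_iff hB11d).1 ((solvable_iff U1).1 hE)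
    exact ⟨⟨hC1, hC⟩, W1, W2, W3, W4, W5, W6, U1, U2, hU1, hU2, rfl, hX2, hX3⟩
  · rintro ⟨⟨hC1, hC⟩, W1, W2, W3, W4, W5, W6, U1, U2, hU1, hU2, rfl, hX2, hX3⟩
    have hE := (solvable_iff U1).2 ((hA11d.mul_mul_eq_iff hB11d).2 ⟨hC, W4, W5, hU1⟩)
    exact ⟨(hA1.mul_sub_mul_eq_iff hB1).2 ⟨hC1, U1, U2, W6, rfl, hX2⟩,
      (second_eq_iff U1 U2).2 ((hA2Ld.mul_sub_mul_eq_iff hB2).2 ⟨hE, W1, W2, W3, hU2, hX3⟩)⟩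

theorem stmt_5 {m1 m2 p q1 q2 n : ℕ}
    (A1 : Mat m1 p) (A1d : Mat p m1) (hA1 : IsMPInv A1 A1d)
    (A2 : Mat m2 p)
    (B1 : Mat q1 n) (B1d : Mat n q1) (hB1 : IsMPInv B1 B1d)
    (B2 : Mat q2 n) (B2d : Mat n q2) (hB2 : IsMPInv B2 B2d)
    (C1 : Mat m1 n) (C2 : Mat m2 n)
    (A2L : Mat m2 p) (hA2L : A2L = A2 * Lp A1 A1d)
    (A2Ld : Mat p m2) (hA2Ld : IsMPInv A2L A2Ld)
    (A11 : Mat m2 p) (hA11 : A11 = Rp A2L A2Ld * A2)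
    (A11d : Mat p m2) (hA11d : IsMPInv A11 A11d)
    (B11 : Mat q1 n) (hB11 : B11 = B1 * Lp B2 B2d)
    (B11d : Mat n q1) (hB11d : IsMPInv B11 B11d)
    (C11 : Mat m2 n)
    (hC11 : C11 = Rp A2L A2Ld * (C2 - A2 * A1d * C1) * Lp B2 B2d)
    (hcond1 : Rp A1 A1d * C1 * Lp B1 B1d = 0)
    (hcond2 : Rp A11 A11d * C11 = 0)
    (hcond3 : C11 * Lp B11 B11d = 0)
    (X1 : Mat p n) (X2 : Mat m1 q1) (X3 : Mat m2 q2) :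
    (A1 * X1 - X2 * B1 = C1 ∧ A2 * X1 - X3 * B2 = C2) ↔
      (∃ (W1 : Mat p q2) (W2 : Mat p n) (W3 : Mat m2 q2) (W4 : Mat p q1)
          (W5 : Mat p q1) (W6 : Mat m1 q1) (U1 : Mat p q1) (U2 : Mat p n),
        U1 = A11d * C11 * B11d + Lp A11 A11d * W4 + W5 * Rp B11 B11d ∧
        U2 = A2Ld * (C2 - A2 * A1d * C1 - A2 * U1 * B1)
              + W1 * B2 + Lp A2L A2Ld * W2 ∧
        X1 = A1d * C1 + U1 * B1 + Lp A1 A1d * U2 ∧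
        X2 = -(Rp A1 A1d * C1 * B1d) + A1 * U1 + W6 * Rp B1 B1d ∧
        X3 = -(Rp A2L A2Ld * (C2 - A2 * A1d * C1 - A2 * U1 * B1) * B2d)
              + A2 * Lp A1 A1d * W1 + W3 * Rp B2 B2d) := by
  exact (stmt_5_general hA1.1 hB1.1 hB2.1 hA2L hA2Ld.1 hA11 hA11d.1 hB11 hB11d.1 hC11).trans
    (and_iff_right ⟨hcond1, hcond2, hcond3⟩)
end
end
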